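/- arXiv:1403.6581 — 2 statements merged into one kernel-verified Lean document; each statement's English description precedes it below -/
import Mathlib

section
/- For all λ ∈ (-d,α) and t ∈ [-1,1): u_λ(t) - u_0(t) = ∫_0^1 (1-r^λ)·(r^{α-λ-1} - r^{d-1})·(r²-2rt+1)^{-(d+α)/2} dr. -/
open MeasureTheory Metric Real Set Filter RealInnerProductSpace
open scoped ENNReal

noncomputable section

/-- Euclidean space ℝ^d. -/
abbrev Ed (d : ℕ) := EuclideanSpace ℝ (Fin d)

/-- The constant `A_{d,α}`. -/
noncomputable def fracConst (d : ℕ) (α : ℝ) : ℝ :=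
  α * 2 ^ (α - 1) * π ^ (-(d : ℝ) / 2) * Real.Gamma (((d : ℝ) + α) / 2) / Real.Gamma (1 - α / 2)

/-- The fractional Laplacian `Δ^{α/2} Φ (x)` exists and equals `L`. -/
def fracLapAt (d : ℕ) (α : ℝ) (Φ : Ed d → ℝ) (x : Ed d) (L : ℝ) : Prop :=
  Filter.Tendsto
    (fun ε : ℝ => fracConst d α *
      ∫ y in {y : Ed d | ε < ‖y - x‖}, (Φ y - Φ x) * ‖y - x‖ ^ (-(d : ℝ) - α))
    (nhdsWithin 0 (Set.Ioi 0)) (nhds L)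

/-- The last coordinate of a vector in ℝ^d. -/
def lastCoord (d : ℕ) (x : Ed d) : ℝ :=
  if h : 0 < d then x ⟨d - 1, Nat.sub_lt h Nat.one_pos⟩ else 0

/-- The unit vector `e_d = (0,…,0,1)`. -/
def eLast (d : ℕ) : Ed d :=
  if h : 0 < d then EuclideanSpace.single ⟨d - 1, Nat.sub_lt h Nat.one_pos⟩ (1 : ℝ) else 0

/-- The right circular cone `Γ_Θ` of angle `Θ`. -/
def cone (d : ℕ) (Θ : ℝ) : Set (Ed d) := {x | ‖x‖ * Real.cos Θ < lastCoord d x}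

/-- The unit sphere `S^{d-1}` in ℝ^d. -/
def unitSphere (d : ℕ) : Set (Ed d) := Metric.sphere (0 : Ed d) 1

/-- The spherical cap `B_Θ`. -/
def capB (d : ℕ) (Θ : ℝ) : Set (Ed d) := {θ | θ ∈ unitSphere d ∧ Real.cos Θ < lastCoord d θ}

/-- The surface measure `σ`: the (d-1)-dimensional Hausdorff measure. -/
noncomputable def sphMeasure (d : ℕ) : Measure (Ed d) := μH[(d : ℝ) - 1]

/-- The kernel `u_λ(t)`. -/
noncomputable def uKernel (d : ℕ) (α lam t : ℝ) : ℝ :=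
  ∫ r in Set.Ioi (0 : ℝ), r ^ ((d : ℝ) + lam - 1) * (r ^ 2 - 2 * r * t + 1) ^ (-((d : ℝ) + α) / 2)

/-- The kernel `u_λ(t)` as a value in `[0,∞]`. -/
noncomputable def uKernelE (d : ℕ) (α lam t : ℝ) : ℝ≥0∞ :=
  ∫⁻ r in Set.Ioi (0 : ℝ),
    ENNReal.ofReal (r ^ ((d : ℝ) + lam - 1) * (r ^ 2 - 2 * r * t + 1) ^ (-((d : ℝ) + α) / 2))

/-- The spherical fractional Laplacian `Δ_S^{α/2} φ (η)` exists and equals `L`. -/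
def sphFracLapAt (d : ℕ) (α : ℝ) (φ : Ed d → ℝ) (η : Ed d) (L : ℝ) : Prop :=
  Filter.Tendsto
    (fun ε : ℝ => fracConst d α *
      ∫ θ in {θ : Ed d | θ ∈ unitSphere d ∧ ⟪θ, η⟫ ≤ Real.cos ε},
        (φ θ - φ η) * uKernel d α 0 ⟪θ, η⟫ ∂(sphMeasure d))
    (nhdsWithin 0 (Set.Ioi 0)) (nhds L)

/-- The integrand of the radial operator `R_λ`. -/
noncomputable def RopIntegrand (d : ℕ) (α lam : ℝ) (φ : Ed d → ℝ) (η θ : Ed d) : ℝ :=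
  φ θ * (uKernel d α lam ⟪θ, η⟫ - uKernel d α 0 ⟪θ, η⟫)

/-- The radial operator `R_λ φ (η)`. -/
noncomputable def Rop (d : ℕ) (α lam : ℝ) (φ : Ed d → ℝ) (η : Ed d) : ℝ :=
  fracConst d α * ∫ θ in unitSphere d, RopIntegrand d α lam φ η θ ∂(sphMeasure d)

/-- The modulus `ω`. -/
noncomputable def omegaFn (α Θ : ℝ) : ℝ :=
  if α < 1 then Θ ^ α else if α = 1 then Θ * |Real.log Θ| else Θ

/-- The Euler beta function. -/
noncomputable def eulerBeta (a b : ℝ) : ℝ := Real.Gamma a * Real.Gamma b / Real.Gamma (a + b)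

/-- The constant `B_{d,α}`. -/
noncomputable def Bconst (d : ℕ) (α : ℝ) : ℝ :=
  Real.Gamma (((d : ℝ) + α) / 2) / (π ^ ((3 : ℝ) / 2) * Real.Gamma (((d : ℝ) - 1 + α) / 2)) *
    Real.sin (π * α / 2) * eulerBeta (1 + α / 2) (((d : ℝ) - 1) / 2)

/-- The constant `C_{d-1,α}`. -/
noncomputable def Cexit (d : ℕ) (α : ℝ) : ℝ :=
  Real.Gamma (((d : ℝ) - 1) / 2) /
    (2 ^ α * Real.Gamma (((d : ℝ) - 1 + α) / 2) * Real.Gamma (1 + α / 2))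

/-- The constant `C̃_{d,α}`. -/
noncomputable def Ctilde (d : ℕ) (α : ℝ) : ℝ :=
  π ^ (((d : ℝ) - 1) / 2) / Real.Gamma (((d : ℝ) - 1) / 2) * Cexit d α *
    eulerBeta (1 + α / 2) (((d : ℝ) - 1) / 2)

/-- The norm `|ỹ|` of the first `d-1` coordinates of `y`. -/
noncomputable def tnorm (d : ℕ) (y : Ed d) : ℝ :=
  Real.sqrt (∑ i : Fin d, if (i : ℕ) < d - 1 then (y i) ^ 2 else 0)

/-- The function `s_ε`. -/
noncomputable def sExit (d : ℕ) (α ε : ℝ) (y : Ed d) : ℝ :=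
  Cexit d α * (max (ε ^ 2 - tnorm d y ^ 2) 0) ^ (α / 2)

/-- The cylinder `Π_ε`. -/
def cylPi (d : ℕ) (ε : ℝ) : Set (Ed d) := {y | tnorm d y < ε}

/-- The hyperplane `F = {y : y_d = 1}`. -/
def hyperF (d : ℕ) : Set (Ed d) := {y | lastCoord d y = 1}

/-- The Riesz kernel `h(y) = |y|^{α-d}`. -/
noncomputable def rieszH (d : ℕ) (α : ℝ) (y : Ed d) : ℝ := ‖y‖ ^ (α - (d : ℝ))

/-- The inversion `T x = x/|x|²`. -/
noncomputable def inversion (d : ℕ) (x : Ed d) : Ed d := (‖x‖ ^ 2)⁻¹ • x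

/-- The shifted cone `V_Θ = Γ_Θ + e_d/2`. -/
def Vcone (d : ℕ) (Θ : ℝ) : Set (Ed d) := {y | y - (1 / 2 : ℝ) • eLast d ∈ cone d Θ}

/-- The spindle `L_ε = T(V_Θ)` with `ε = tan(Θ/2)`, i.e. `Θ = 2 arctan ε`. -/
def Lspindle (d : ℕ) (ε : ℝ) : Set (Ed d) := inversion d '' Vcone d (2 * Real.arctan ε)

/-- The curvilinear projection `y* = T(e_d/2 + (Ty - e_d/2)/(2|Ty - e_d/2|))`. -/
noncomputable def ystar (d : ℕ) (y : Ed d) : Ed d :=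
  inversion d ((1 / 2 : ℝ) • eLast d +
    (2 * ‖inversion d y - (1 / 2 : ℝ) • eLast d‖)⁻¹ • (inversion d y - (1 / 2 : ℝ) • eLast d))

open scoped Classical in
/-- The function `s*_ε`. -/
noncomputable def sStar (d : ℕ) (α ε : ℝ) (y : Ed d) : ℝ :=
  if y ∈ Lspindle d ε then Cexit d α * (max (ε ^ 2 - tnorm d (ystar d y) ^ 2) 0) ^ (α / 2)
  else 0

open scoped Classical in
/-- The function `u = K(h s*_ε)`, i.e. `u(y) = s*_ε(Ty)`, `u(0) = 0`. -/
noncomputable def uFn (d : ℕ) (α ε : ℝ) (y : Ed d) : ℝ :=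
  if y = 0 then 0 else sStar d α ε (inversion d y)

/-- The spherical profile `φ_Θ`. -/
noncomputable def profileFn (d : ℕ) (α Θ : ℝ) (θ : Ed d) : ℝ :=
  2 ^ α * Cexit d α *
    (max (Real.tan (Θ / 2) ^ 2 - ‖eLast d - θ‖ ^ 2 / ‖eLast d + θ‖ ^ 2) 0) ^ (α / 2)

/-- Laplacian on ℝ^d as the sum of pure second partial derivatives. -/
noncomputable def lapE (d : ℕ) (u : Ed d → ℝ) (x : Ed d) : ℝ :=
  ∑ i : Fin d,
    iteratedFDeriv ℝ 2 u x ![EuclideanSpace.single i (1 : ℝ), EuclideanSpace.single i (1 : ℝ)]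

/-- Laplacian on ℝ^d × ℝ as the sum of the d+1 pure second partial derivatives. -/
noncomputable def lapProd (d : ℕ) (U : Ed d × ℝ → ℝ) (p : Ed d × ℝ) : ℝ :=
  (∑ i : Fin d, iteratedFDeriv ℝ 2 U p
      ![(EuclideanSpace.single i (1 : ℝ), (0 : ℝ)), (EuclideanSpace.single i (1 : ℝ), (0 : ℝ))]) +
    iteratedFDeriv ℝ 2 U p ![((0 : Ed d), (1 : ℝ)), ((0 : Ed d), (1 : ℝ))]

/-- The Poisson kernel `P_t(x)` for the upper half-space. -/
noncomputable def poissonK (d : ℕ) (t : ℝ) (x : Ed d) : ℝ :=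
  Real.Gamma (((d : ℝ) + 1) / 2) / π ^ (((d : ℝ) + 1) / 2) * t *
    (‖x‖ ^ 2 + t ^ 2) ^ (-((d : ℝ) + 1) / 2)

end

theorem sq_sub_two_mul_mul_add_one_pos {t r : ℝ} (ht : t < 1) (hr : 0 ≤ r) :
    0 < r ^ 2 - 2 * r * t + 1 := by
  rcases hr.eq_or_lt with rfl | hr
  · norm_num
  · nlinarith [sq_nonneg (r - 1), mul_pos hr (sub_pos.2 ht)]

theorem integrableOn_Ioo_rpow_mul_kernel {t s : ℝ} (c : ℝ) (ht : t < 1) (hs : 0 < s) :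
    IntegrableOn (fun r : ℝ => r ^ (s - 1) * (r ^ 2 - 2 * r * t + 1) ^ c) (Ioo 0 1) := by
  have hpow : IntegrableOn (fun r : ℝ => r ^ (s - 1)) (Icc 0 1) := by
    rw [← intervalIntegrable_iff_integrableOn_Icc_of_le zero_le_one]
    exact intervalIntegral.intervalIntegrable_rpow' (by linarith)
  have hcont : ContinuousOn (fun r : ℝ => (r ^ 2 - 2 * r * t + 1) ^ c) (Icc 0 1) :=
    ContinuousOn.rpow_const (by fun_prop)
      fun r hr => Or.inl (sq_sub_two_mul_mul_add_one_pos ht hr.1).ne'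
  exact (hpow.mul_continuousOn hcont isCompact_Icc).mono_set Ioo_subset_Icc_self

theorem image_inv_Ioo_zero_one : (fun r : ℝ => r⁻¹) '' Ioo 0 1 = Ioi 1 := by
  simpa [← image_inv_eq_inv] using inv_Ioo_0_left (zero_lt_one' ℝ)

theorem abs_deriv_inv_smul_rpow_mul_kernel {t r : ℝ} (b s : ℝ) (ht : t < 1) (hr : 0 < r) :
    |-(r ^ 2)⁻¹| • ((r⁻¹) ^ (s - 1) * ((r⁻¹) ^ 2 - 2 * r⁻¹ * t + 1) ^ (-b / 2)) =
      r ^ (b - s - 1) * (r ^ 2 - 2 * r * t + 1) ^ (-b / 2) := by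
  have hK := sq_sub_two_mul_mul_add_one_pos ht hr.le
  have hinv : (r⁻¹) ^ 2 - 2 * r⁻¹ * t + 1 = r ^ (-2 : ℝ) * (r ^ 2 - 2 * r * t + 1) := by
    rw [rpow_neg hr.le, rpow_two]
    field_simp
    ring
  rw [hinv, mul_rpow (by positivity) hK.le, ← rpow_mul hr.le, inv_rpow hr.le, ← rpow_neg hr.le,
    abs_neg, abs_of_pos (by positivity), ← rpow_two, ← rpow_neg hr.le, smul_eq_mul,
    ← mul_assoc, ← mul_assoc, ← rpow_add hr, ← rpow_add hr]
  ring_nf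

theorem hasDerivWithinAt_inv_of_mem_Ioo {r : ℝ} (hr : r ∈ Ioo (0 : ℝ) 1) :
    HasDerivWithinAt (fun x : ℝ => x⁻¹) (-(r ^ 2)⁻¹) (Ioo 0 1) r :=
  (hasDerivAt_inv hr.1.ne').hasDerivWithinAt

theorem integrableOn_Ioi_one_rpow_mul_kernel {t s b : ℝ} (ht : t < 1) (hs : s < b) :
    IntegrableOn (fun r : ℝ => r ^ (s - 1) * (r ^ 2 - 2 * r * t + 1) ^ (-b / 2)) (Ioi 1) := by
  rw [← image_inv_Ioo_zero_one, integrableOn_image_iff_integrableOn_abs_deriv_smul measurableSet_Ioo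
    (fun _ => hasDerivWithinAt_inv_of_mem_Ioo) inv_injective.injOn]
  exact (integrableOn_Ioo_rpow_mul_kernel _ ht (sub_pos.2 hs)).congr_fun
    (fun r hr => (abs_deriv_inv_smul_rpow_mul_kernel b s ht hr.1).symm) measurableSet_Ioo

theorem integral_Ioi_one_rpow_mul_kernel {t : ℝ} (s b : ℝ) (ht : t < 1) :
    ∫ r in Ioi (1 : ℝ), r ^ (s - 1) * (r ^ 2 - 2 * r * t + 1) ^ (-b / 2) =
      ∫ r in Ioo (0 : ℝ) 1, r ^ (b - s - 1) * (r ^ 2 - 2 * r * t + 1) ^ (-b / 2) := by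
  rw [← image_inv_Ioo_zero_one, integral_image_eq_integral_abs_deriv_smul measurableSet_Ioo
    (fun _ => hasDerivWithinAt_inv_of_mem_Ioo) inv_injective.injOn]
  exact setIntegral_congr_fun measurableSet_Ioo
    fun r hr => abs_deriv_inv_smul_rpow_mul_kernel b s ht hr.1

/-- Folding `(1, ∞)` onto `(0, 1)` by `r ↦ r⁻¹` in the integral defining `u_λ(t)`. -/
theorem uKernel_eq_integral_Ioo (d : ℕ) {α lam t : ℝ} (hlam : -(d : ℝ) < lam) (hlam' : lam < α)
    (ht : t < 1) :
    uKernel d α lam t = ∫ r in Ioo (0 : ℝ) 1,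
      (r ^ ((d : ℝ) + lam - 1) * (r ^ 2 - 2 * r * t + 1) ^ (-((d : ℝ) + α) / 2) +
        r ^ (α - lam - 1) * (r ^ 2 - 2 * r * t + 1) ^ (-((d : ℝ) + α) / 2)) := by
  have hIoo := integrableOn_Ioo_rpow_mul_kernel (-((d : ℝ) + α) / 2) ht
    (show 0 < (d : ℝ) + lam by linarith)
  have hIoi := integrableOn_Ioi_one_rpow_mul_kernel ht
    (show (d : ℝ) + lam < (d : ℝ) + α by linarith)
  have hinv := integrableOn_Ioo_rpow_mul_kernel (-((d : ℝ) + α) / 2) ht (sub_pos.2 hlam')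
  rw [uKernel, ← Ioc_union_Ioi_eq_Ioi zero_le_one,
    setIntegral_union (Ioc_disjoint_Ioi le_rfl) measurableSet_Ioi
      ((integrableOn_Ioc_iff_integrableOn_Ioo enorm_ne_top).2 hIoo) hIoi,
    integral_Ioc_eq_integral_Ioo, integral_Ioi_one_rpow_mul_kernel _ _ ht,
    add_sub_add_left_eq_sub, integral_add hIoo hinv]

/-- formula for the difference `u_λ(t) - u_0(t)` as an integral over `(0,1)`. -/
theorem uKernel_diff_eq (d : ℕ) (hd : 2 ≤ d) (α : ℝ) (hα : 0 < α) (hα2 : α < 2) :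
    ∀ lam ∈ Set.Ioo (-(d : ℝ)) α, ∀ t ∈ Set.Ico (-1 : ℝ) 1,
      uKernel d α lam t - uKernel d α 0 t =
        ∫ r in Set.Ioo (0 : ℝ) 1,
          (1 - r ^ lam) * (r ^ (α - lam - 1) - r ^ ((d : ℝ) - 1)) *
            (r ^ 2 - 2 * r * t + 1) ^ (-((d : ℝ) + α) / 2) := by
  rintro lam ⟨hlam, hlam'⟩ t ⟨-, ht⟩
  have hd0 : (0 : ℝ) < d := by exact_mod_cast (by omega : 0 < d)
  rw [uKernel_eq_integral_Ioo d hlam hlam' ht,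
    uKernel_eq_integral_Ioo d (neg_lt_zero.2 hd0) hα ht, ← integral_sub]
  · refine setIntegral_congr_fun measurableSet_Ioo fun r hr => ?_
    have hfst : r ^ lam * r ^ (α - lam - 1) = r ^ (α - 1) := by
      rw [← rpow_add hr.1]
      ring_nf
    have hsnd : r ^ lam * r ^ ((d : ℝ) - 1) = r ^ ((d : ℝ) + lam - 1) := by
      rw [← rpow_add hr.1]
      ring_nf
    simp only [add_zero, sub_zero, ← hfst, ← hsnd]
    ring
  · exact (integrableOn_Ioo_rpow_mul_kernel _ ht (by linarith)).add
      (integrableOn_Ioo_rpow_mul_kernel _ ht (by linarith))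
  · exact (integrableOn_Ioo_rpow_mul_kernel _ ht (by linarith)).add
      (integrableOn_Ioo_rpow_mul_kernel _ ht (by linarith))
end

section
/- For every λ ∈ (-d,α): (i) u_λ(t) < ∞ for every t ∈ [-1,1), while the integral ∫_0^∞ r^{d+λ-1}·|r-1|^{-(d+α)} dr diverges (i.e. u_λ(1) = ∞); (ii) the function t ↦ u_λ(t) is strictly increasing on [-1,1). Moreover, for every fixed t ∈ [-1,1), the function λ ↦ u_λ(t) is strictly increasing on [(α-d)/2, α), and u_λ(t) → ∞ as λ → α from below. -/
open MeasureTheory Metric Real Set Filter RealInnerProductSpace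
open scoped ENNReal

/-- The integrand `r ^ (p - 1) * (r ^ 2 - 2 * r * t + 1) ^ (-s / 2)` of `u_λ(t)`, with
`p = d + λ` and `s = d + α`. -/
noncomputable def radialIntegrand (p s t r : ℝ) : ℝ :=
  r ^ (p - 1) * (r ^ 2 - 2 * r * t + 1) ^ (-s / 2)

lemma measurable_radialIntegrand (p s t : ℝ) : Measurable (radialIntegrand p s t) := by
  unfold radialIntegrand
  fun_prop

lemma uKernelE_eq_lintegral_radialIntegrand (d : ℕ) (α lam t : ℝ) :
    uKernelE d α lam t =
      ∫⁻ r in Ioi (0 : ℝ), ENNReal.ofReal (radialIntegrand (d + lam) (d + α) t r) :=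
  rfl

lemma quadratic_pos {r t : ℝ} (hr : 0 < r) (ht : t < 1) : 0 < r ^ 2 - 2 * r * t + 1 := by
  nlinarith [sq_nonneg (r - 1), mul_pos hr (sub_pos.2 ht)]

lemma radialIntegrand_pos {p s t r : ℝ} (hr : 0 < r) (ht : t < 1) :
    0 < radialIntegrand p s t r :=
  mul_pos (rpow_pos_of_pos hr _) (rpow_pos_of_pos (quadratic_pos hr ht) _)

/-- For `t < 1` the quadratic `r ^ 2 - 2 * r * t + 1` is comparable to `r ^ 2 + 1`. -/
lemma mul_sq_add_one_le_quadratic {r t : ℝ} (hr : 0 < r) :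
    (1 - max t 0) * (r ^ 2 + 1) ≤ r ^ 2 - 2 * r * t + 1 := by
  have h1 : r * t ≤ r * max t 0 := mul_le_mul_of_nonneg_left (le_max_left _ _) hr.le
  nlinarith [mul_nonneg (le_max_right t 0) (sq_nonneg (r - 1))]

lemma sq_rpow_neg_half {r : ℝ} (hr : 0 ≤ r) (s : ℝ) : (r ^ 2) ^ (-s / 2) = r ^ (-s) := by
  rw [← rpow_natCast, ← rpow_mul hr]
  congr 1
  push_cast
  ring

/-- Finiteness below the diagonal. -/
lemma lintegral_radialIntegrand_lt_top {p s t : ℝ} (hp : 0 < p) (hps : p < s) (ht : t < 1) :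
    ∫⁻ r in Ioi (0 : ℝ), ENNReal.ofReal (radialIntegrand p s t r) < ⊤ := by
  have hc : 0 < 1 - max t 0 := by simp [ht]
  set C := (1 - max t 0) ^ (-s / 2) with hC
  have hs : -s / 2 ≤ 0 := by linarith
  have hbound : ∀ r : ℝ, 0 < r → ∀ x : ℝ, 0 < x → x ≤ r ^ 2 + 1 →
      radialIntegrand p s t r ≤ C * (r ^ (p - 1) * x ^ (-s / 2)) := by
    intro r hr x hx hxr
    have h : (r ^ 2 - 2 * r * t + 1) ^ (-s / 2) ≤ C * x ^ (-s / 2) := by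
      rw [hC, ← mul_rpow hc.le hx.le]
      refine rpow_le_rpow_of_nonpos (mul_pos hc hx) ?_ hs
      exact (mul_le_mul_of_nonneg_left hxr hc.le).trans (mul_sq_add_one_le_quadratic hr)
    calc radialIntegrand p s t r ≤ r ^ (p - 1) * (C * x ^ (-s / 2)) :=
          mul_le_mul_of_nonneg_left h (rpow_nonneg hr.le _)
      _ = _ := by ring
  have hsmall : IntegrableOn (radialIntegrand p s t) (Ioc 0 1) := by
    have hint : IntegrableOn (fun r : ℝ => C * r ^ (p - 1)) (Ioc 0 1) :=
      ((intervalIntegral.intervalIntegrable_rpow' (by linarith)).1).const_mul C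
    refine hint.mono' (measurable_radialIntegrand p s t).aestronglyMeasurable ?_
    filter_upwards [ae_restrict_mem measurableSet_Ioc] with r hr
    rw [norm_of_nonneg (radialIntegrand_pos hr.1 ht).le]
    simpa using hbound r hr.1 1 one_pos (by nlinarith [sq_nonneg r])
  have hlarge : IntegrableOn (radialIntegrand p s t) (Ioi 1) := by
    have hint : IntegrableOn (fun r : ℝ => C * r ^ (p - 1 - s)) (Ioi 1) :=
      (integrableOn_Ioi_rpow_of_lt (by linarith) one_pos).const_mul C
    refine hint.mono' (measurable_radialIntegrand p s t).aestronglyMeasurable ?_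
    filter_upwards [ae_restrict_mem measurableSet_Ioi] with r hr
    have hr0 : 0 < r := one_pos.trans hr
    rw [norm_of_nonneg (radialIntegrand_pos hr0 ht).le]
    have := hbound r hr0 (r ^ 2) (by positivity) (by linarith)
    rwa [sq_rpow_neg_half hr0.le, ← rpow_add hr0, ← sub_eq_add_neg] at this
  have h := hsmall.union hlarge
  rw [Ioc_union_Ioi_eq_Ioi zero_le_one] at h
  exact Integrable.lintegral_lt_top h

/-- Divergence on the diagonal. -/
lemma lintegral_radialIntegrand_one {p s : ℝ} (hp : 0 < p) (hs : 1 ≤ s) :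
    ∫⁻ r in Ioi (0 : ℝ), ENNReal.ofReal (radialIntegrand p s 1 r) = ⊤ := by
  have hsq : ∀ r : ℝ, r ^ 2 - 2 * r * 1 + 1 = (r - 1) ^ 2 := fun r => by ring
  by_contra htop
  have hint : IntegrableOn (radialIntegrand p s 1) (Ioi 0) := by
    refine (lintegral_ofReal_ne_top_iff_integrable
      (measurable_radialIntegrand p s 1).aestronglyMeasurable ?_).1 htop
    filter_upwards [ae_restrict_mem measurableSet_Ioi] with r hr
    have hr : 0 < r := hr
    unfold radialIntegrand
    rw [hsq]
    positivity
  have hinv : IntegrableOn (fun r : ℝ => (r - 1)⁻¹) (Ioo 1 2) := by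
    refine ((hint.mono_set fun r hr => zero_lt_one.trans hr.1).const_mul 2).mono'
      (by fun_prop) ?_
    filter_upwards [ae_restrict_mem measurableSet_Ioo] with r hr
    have hr1 : 0 < r - 1 := sub_pos.2 hr.1
    have hr0 : 0 < r := zero_lt_one.trans hr.1
    rw [norm_of_nonneg (inv_nonneg.2 hr1.le), radialIntegrand, hsq, sq_rpow_neg_half hr1.le]
    have h1 : (1 : ℝ) / 2 ≤ r ^ (p - 1) := by
      calc (1 : ℝ) / 2 ≤ r⁻¹ := by
            rw [one_div]
            exact inv_anti₀ hr0 hr.2.le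
        _ = r ^ (-1 : ℝ) := (rpow_neg_one r).symm
        _ ≤ r ^ (p - 1) := rpow_le_rpow_of_exponent_le hr.1.le (by linarith)
    have h2 : (r - 1)⁻¹ ≤ (r - 1) ^ (-s) := by
      rw [← rpow_neg_one]
      exact rpow_le_rpow_of_exponent_ge hr1 (by linarith [hr.2]) (by linarith)
    nlinarith [mul_le_mul h1 h2 (inv_nonneg.2 hr1.le) (rpow_nonneg hr0.le _)]
  rw [← intervalIntegrable_iff_integrableOn_Ioo_of_le one_le_two,
    intervalIntegrable_sub_inv_iff] at hinv
  simp at hinv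

lemma radialIntegrand_lt_radialIntegrand {p s t t' r : ℝ} (hs : 0 < s) (hr : 0 < r)
    (htt' : t < t') (ht' : t' < 1) : radialIntegrand p s t r < radialIntegrand p s t' r := by
  refine mul_lt_mul_of_pos_left ?_ (rpow_pos_of_pos hr _)
  exact rpow_lt_rpow_of_neg (quadratic_pos hr ht') (by nlinarith) (by linarith)

lemma lintegral_radialIntegrand_strictMonoOn {p s : ℝ} (hp : 0 < p) (hps : p < s) :
    StrictMonoOn (fun t => ∫⁻ r in Ioi (0 : ℝ), ENNReal.ofReal (radialIntegrand p s t r))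
      (Iio 1) := by
  intro t ht t' ht' htt'
  refine setLIntegral_strict_mono measurableSet_Ioi (by simp)
    (measurable_radialIntegrand p s t').ennreal_ofReal
    (lintegral_radialIntegrand_lt_top hp hps ht).ne (ae_of_all _ fun r hr => ?_)
  exact (ENNReal.ofReal_lt_ofReal_iff (radialIntegrand_pos hr ht')).2
    (radialIntegrand_lt_radialIntegrand (hp.trans hps) hr htt' ht')

/-- The inversion `r ↦ r⁻¹` exchanges the exponents `p` and `s - p`. -/
lemma inv_sq_mul_radialIntegrand_inv {p s t r : ℝ} (hr : 0 < r) (ht : t < 1) :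
    (r ^ 2)⁻¹ * radialIntegrand p s t r⁻¹ = radialIntegrand (s - p) s t r := by
  have hquad : r⁻¹ ^ 2 - 2 * r⁻¹ * t + 1 = r⁻¹ ^ 2 * (r ^ 2 - 2 * r * t + 1) := by
    field_simp
    ring
  have hinv : (r ^ 2)⁻¹ = r ^ (-2 : ℝ) := by
    rw [rpow_neg hr.le]
    norm_cast
  unfold radialIntegrand
  rw [hquad, mul_rpow (by positivity) (quadratic_pos hr ht).le,
    sq_rpow_neg_half (inv_nonneg.2 hr.le), inv_rpow hr.le, inv_rpow hr.le, ← rpow_neg hr.le,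
    ← rpow_neg hr.le, hinv, ← mul_assoc, ← mul_assoc, ← rpow_add hr, ← rpow_add hr]
  congr 2
  ring

lemma lintegral_radialIntegrand_Ioo {p s t : ℝ} (ht : t < 1) :
    ∫⁻ r in Ioo (0 : ℝ) 1, ENNReal.ofReal (radialIntegrand p s t r) =
      ∫⁻ r in Ioi (1 : ℝ), ENNReal.ofReal (radialIntegrand (s - p) s t r) := by
  have himage : (fun r : ℝ => r⁻¹) '' Ioi 1 = Ioo 0 1 := by
    have := inv_Ioi₀ (one_pos (α := ℝ))
    rwa [inv_one, ← image_inv_eq_inv] at this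
  rw [← himage, lintegral_image_eq_lintegral_abs_deriv_mul measurableSet_Ioi
    (fun r (hr : 1 < r) => (hasDerivAt_inv (one_pos.trans hr).ne').hasDerivWithinAt)
    inv_injective.injOn]
  refine setLIntegral_congr_fun measurableSet_Ioi fun r (hr : 1 < r) => ?_
  have hr0 : 0 < r := one_pos.trans hr
  rw [← ENNReal.ofReal_mul (abs_nonneg _), abs_neg, abs_of_nonneg (by positivity),
    inv_sq_mul_radialIntegrand_inv hr0 ht]

/-- Folding the integral over `(0, ∞)` onto `(1, ∞)`. -/
lemma lintegral_radialIntegrand_eq_Ioi_one {p s t : ℝ} (ht : t < 1) :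
    ∫⁻ r in Ioi (0 : ℝ), ENNReal.ofReal (radialIntegrand p s t r) =
      ∫⁻ r in Ioi (1 : ℝ),
        ENNReal.ofReal (radialIntegrand p s t r + radialIntegrand (s - p) s t r) := by
  have hsplit : ∫⁻ r in Ioi (0 : ℝ), ENNReal.ofReal (radialIntegrand p s t r) =
      (∫⁻ r in Ioc (0 : ℝ) 1, ENNReal.ofReal (radialIntegrand p s t r)) +
        ∫⁻ r in Ioi (1 : ℝ), ENNReal.ofReal (radialIntegrand p s t r) := by
    rw [← Ioc_union_Ioi_eq_Ioi (zero_le_one (α := ℝ)),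
      lintegral_union measurableSet_Ioi (Ioc_disjoint_Ioi le_rfl)]
  rw [hsplit, setLIntegral_congr Ioo_ae_eq_Ioc.symm, lintegral_radialIntegrand_Ioo ht, add_comm,
    ← lintegral_add_left (measurable_radialIntegrand p s t).ennreal_ofReal]
  refine setLIntegral_congr_fun measurableSet_Ioi fun r (hr : 1 < r) => ?_
  have hr0 : 0 < r := one_pos.trans hr
  exact (ENNReal.ofReal_add (radialIntegrand_pos hr0 ht).le (radialIntegrand_pos hr0 ht).le).symm

/-- `p ↦ x ^ p + x ^ (s - p)` increases on `[s / 2, ∞)` for `1 < x`. -/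
lemma rpow_add_rpow_sub_lt {x p q s : ℝ} (hx : 1 < x) (hp : s / 2 ≤ p) (hpq : p < q) :
    x ^ p + x ^ (s - p) < x ^ q + x ^ (s - q) := by
  have hx0 : 0 < x := one_pos.trans hx
  have h1 : 1 < x ^ (q - p) := one_lt_rpow hx (by linarith)
  have h2 : x ^ (s - q) < x ^ p := rpow_lt_rpow_of_exponent_lt hx (by linarith)
  have h3 : x ^ q = x ^ p * x ^ (q - p) := by rw [← rpow_add hx0]; congr 1; ring
  have h4 : x ^ (s - p) = x ^ (s - q) * x ^ (q - p) := by rw [← rpow_add hx0]; congr 1; ring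
  rw [h3, h4]
  nlinarith [mul_pos (sub_pos.2 h1) (sub_pos.2 h2)]

lemma radialIntegrand_add_lt {p q s t r : ℝ} (hr : 1 < r) (ht : t < 1) (hp : s / 2 ≤ p)
    (hpq : p < q) :
    radialIntegrand p s t r + radialIntegrand (s - p) s t r <
      radialIntegrand q s t r + radialIntegrand (s - q) s t r := by
  have hr0 : 0 < r := one_pos.trans hr
  unfold radialIntegrand
  rw [← add_mul, ← add_mul]
  refine mul_lt_mul_of_pos_right ?_ (rpow_pos_of_pos (quadratic_pos hr0 ht) _)
  rw [rpow_sub_one hr0.ne', rpow_sub_one hr0.ne', rpow_sub_one hr0.ne', rpow_sub_one hr0.ne',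
    ← add_div, ← add_div]
  exact div_lt_div_of_pos_right (rpow_add_rpow_sub_lt hr hp hpq) hr0

lemma lintegral_radialIntegrand_lt_of_exponent_lt {p q s t : ℝ} (ht : t < 1)
    (hp : s / 2 ≤ p) (hpq : p < q) (hqs : q < s) :
    ∫⁻ r in Ioi (0 : ℝ), ENNReal.ofReal (radialIntegrand p s t r) <
      ∫⁻ r in Ioi (0 : ℝ), ENNReal.ofReal (radialIntegrand q s t r) := by
  have hfin := lintegral_radialIntegrand_lt_top (p := p) (by linarith) (hpq.trans hqs) ht
  rw [lintegral_radialIntegrand_eq_Ioi_one ht] at hfin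
  rw [lintegral_radialIntegrand_eq_Ioi_one ht, lintegral_radialIntegrand_eq_Ioi_one ht]
  refine setLIntegral_strict_mono measurableSet_Ioi (by simp)
    ((measurable_radialIntegrand q s t).add (measurable_radialIntegrand (s - q) s t)).ennreal_ofReal
    hfin.ne (ae_of_all _ fun r hr => ?_)
  have hr0 : 0 < r := one_pos.trans hr
  exact (ENNReal.ofReal_lt_ofReal_iff
    (add_pos (radialIntegrand_pos hr0 ht) (radialIntegrand_pos hr0 ht))).2
    (radialIntegrand_add_lt hr ht hp hpq)

/-- A lower bound for the integral which blows up as `p` increases to `s`. -/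
lemma ofReal_div_sub_le_lintegral_radialIntegrand {p s t : ℝ} (hs : 0 < s) (hps : p < s)
    (ht : -1 ≤ t) (ht1 : t < 1) :
    ENNReal.ofReal (4 ^ (-s / 2) / (s - p)) ≤
      ∫⁻ r in Ioi (0 : ℝ), ENNReal.ofReal (radialIntegrand p s t r) := by
  have hint : IntegrableOn (fun r : ℝ => (4 : ℝ) ^ (-s / 2) * r ^ (p - 1 - s)) (Ioi 1) :=
    (integrableOn_Ioi_rpow_of_lt (by linarith) one_pos).const_mul _
  have hval : ∫ r in Ioi (1 : ℝ), (4 : ℝ) ^ (-s / 2) * r ^ (p - 1 - s) =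
      4 ^ (-s / 2) / (s - p) := by
    rw [integral_const_mul, integral_Ioi_rpow_of_lt (by linarith) one_pos, one_rpow,
      div_eq_mul_inv, div_eq_mul_inv, neg_one_mul, ← inv_neg]
    congr 2
    ring
  rw [← hval, ofReal_integral_eq_lintegral_ofReal hint]
  · refine (setLIntegral_mono' measurableSet_Ioi fun r (hr : 1 < r) => ?_).trans
      (lintegral_mono_set (Ioi_subset_Ioi zero_le_one))
    have hr0 : 0 < r := one_pos.trans hr
    refine ENNReal.ofReal_le_ofReal ?_
    have hquad : (4 * r ^ 2) ^ (-s / 2) ≤ (r ^ 2 - 2 * r * t + 1) ^ (-s / 2) :=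
      rpow_le_rpow_of_nonpos (quadratic_pos hr0 ht1) (by nlinarith) (by linarith)
    rw [mul_rpow (by norm_num) (by positivity), sq_rpow_neg_half hr0.le] at hquad
    calc (4 : ℝ) ^ (-s / 2) * r ^ (p - 1 - s)
        = r ^ (p - 1) * (4 ^ (-s / 2) * r ^ (-s)) := by
          rw [sub_eq_add_neg (p - 1) s, rpow_add hr0]
          ring
      _ ≤ _ := mul_le_mul_of_nonneg_left hquad (rpow_nonneg hr0.le _)
  · filter_upwards [ae_restrict_mem measurableSet_Ioi] with r hr
    have hr0 : 0 < r := one_pos.trans hr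
    positivity

lemma tendsto_uKernelE_nhdsLT {d : ℕ} {α t : ℝ} (hα : 0 < α) (ht : t ∈ Ico (-1 : ℝ) 1) :
    Tendsto (fun μ => uKernelE d α μ t) (nhdsWithin α (Iio α)) (nhds ⊤) := by
  have hs : 0 < (d : ℝ) + α := by positivity
  have hlower : Tendsto (fun μ : ℝ => ENNReal.ofReal (4 ^ (-(d + α) / 2) * (α - μ)⁻¹))
      (nhdsWithin α (Iio α)) (nhds ⊤) := by
    refine ENNReal.tendsto_ofReal_atTop.comp (Tendsto.const_mul_atTop (by positivity) ?_)
    refine tendsto_inv_nhdsGT_zero.comp (tendsto_nhdsWithin_iff.2 ⟨?_, ?_⟩)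
    · exact ((continuous_const.sub continuous_id).tendsto' α 0 (sub_self α)).mono_left
        nhdsWithin_le_nhds
    · filter_upwards [self_mem_nhdsWithin] with μ (hμ : μ < α) using sub_pos.2 hμ
  refine tendsto_nhds_top_mono hlower ?_
  filter_upwards [self_mem_nhdsWithin] with μ (hμ : μ < α)
  rw [uKernelE_eq_lintegral_radialIntegrand, ← div_eq_mul_inv]
  have h := ofReal_div_sub_le_lintegral_radialIntegrand (p := d + μ) hs (by linarith) ht.1 ht.2
  rwa [add_sub_add_left_eq_sub] at h

/-- finiteness and monotonicity properties of the kernel `u_λ(t)`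
(as a value in `[0,∞]`): finiteness for `t ∈ [-1,1)`, divergence at `t = 1`, strict
monotonicity in `t`, strict monotonicity in `λ` on `[(α-d)/2, α)`, and blow-up as `λ → α⁻`. -/
theorem uKernel_monotonicity (d : ℕ) (hd : 2 ≤ d) (α : ℝ) (hα : 0 < α) (hα2 : α < 2) :
    ∀ lam ∈ Set.Ioo (-(d : ℝ)) α,
      (∀ t ∈ Set.Ico (-1 : ℝ) 1, uKernelE d α lam t < ⊤) ∧
      uKernelE d α lam 1 = ⊤ ∧
      StrictMonoOn (fun t => uKernelE d α lam t) (Set.Ico (-1 : ℝ) 1) ∧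
      ∀ t ∈ Set.Ico (-1 : ℝ) 1,
        StrictMonoOn (fun μ => uKernelE d α μ t) (Set.Ico ((α - (d : ℝ)) / 2) α) ∧
        Filter.Tendsto (fun μ => uKernelE d α μ t) (nhdsWithin α (Set.Iio α)) (nhds ⊤) := by
  rintro lam ⟨hlam, hlam'⟩
  have hd' : (2 : ℝ) ≤ d := by exact_mod_cast hd
  have hp : 0 < (d : ℝ) + lam := by linarith
  have hps : (d : ℝ) + lam < d + α := by linarith
  simp only [uKernelE_eq_lintegral_radialIntegrand]
  refine ⟨fun t ht => lintegral_radialIntegrand_lt_top hp hps ht.2,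
    lintegral_radialIntegrand_one hp (by linarith),
    (lintegral_radialIntegrand_strictMonoOn hp hps).mono fun t ht => ht.2,
    fun t ht => ⟨fun μ hμ ν hν hμν => ?_, ?_⟩⟩
  · exact lintegral_radialIntegrand_lt_of_exponent_lt ht.2
      (by linarith [hμ.1]) (by linarith) (by linarith [hν.2])
  · exact tendsto_uKernelE_nhdsLT hα ht
end
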